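/- There exists a class C of finite simple graphs that is f_k-bounded for every k ≥ 1 (in fact f_k(G) ≤ 2 for every G in C and every k ≥ 1) but is not nowhere dense. Concretely, the class C = {G_n : n ≥ 1}, where G_n is obtained from the complete bipartite graph K_{n,n} by subdividing every edge once, has these properties. -/

import Mathlib

open scoped Classical
open scoped Function

namespace InducedArboricity

/-- The edges of the subgraph of `G` induced by vertex set `S`, viewed as edges of `G`. -/
def forestEdges {V : Type*} (G : SimpleGraph V) (S : Set V) : Set (Sym2 V) :=
  {e | e ∈ G.edgeSet ∧ ∀ x ∈ e, x ∈ S}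

/-- The number of edges of the connected component of `v` in `H`. -/
noncomputable def compEdgeCount {W : Type*} (H : SimpleGraph W) (v : W) : ℕ :=
  {e | e ∈ H.edgeSet ∧ ∀ x ∈ e, H.Reachable v x}.ncard

/-- `S` induces a `k`-strong forest in `G`: the induced subgraph is acyclic and each of its
connected components has at least `k` edges. -/
def IsStrongForest {V : Type*} (G : SimpleGraph V) (k : ℕ) (S : Set V) : Prop :=
  (G.induce S).IsAcyclic ∧ ∀ v : S, k ≤ compEdgeCount (G.induce S) v

/-- An edge `e` of `G` is `k`-valid if it lies in some `k`-strong forest of `G`. -/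
def KValid {V : Type*} (G : SimpleGraph V) (k : ℕ) (e : Sym2 V) : Prop :=
  ∃ S : Set V, IsStrongForest G k S ∧ e ∈ forestEdges G S

/-- The `k`-strong induced arboricity: the least number of `k`-strong forests of `G`
covering all `k`-valid edges of `G`. -/
noncomputable def fStrong {V : Type*} (G : SimpleGraph V) (k : ℕ) : ℕ :=
  sInf {N | ∃ F : Fin N → Set V,
    (∀ i, IsStrongForest G k (F i)) ∧
    ∀ e : Sym2 V, KValid G k e → ∃ i, e ∈ forestEdges G (F i)}

/-- `G` is a `d`-shallow minor of `H`. -/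
def IsShallowMinor {V W : Type*} (d : ℕ) (G : SimpleGraph V) (H : SimpleGraph W) : Prop :=
  ∃ B : V → Set W,
    Pairwise (Disjoint on B) ∧
    (∀ v, ∃ c : B v, ∀ y : B v,
      (H.induce (B v)).Reachable c y ∧ (H.induce (B v)).dist c y ≤ d) ∧
    (∀ u v, G.Adj u v → ∃ x ∈ B u, ∃ y ∈ B v, H.Adj x y)

/-- A class of finite simple graphs, one set of graphs for each number of vertices. -/
def GraphClass : Type :=
  ∀ n : ℕ, Set (SimpleGraph (Fin n))

/-- A class of graphs has bounded expansion if for every `d` there is a constant `a` such that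
every `d`-shallow minor of a member of the class has at most `a` times as many edges
as vertices. -/
def BoundedExpansion (C : GraphClass) : Prop :=
  ∀ d : ℕ, ∃ a : ℕ, ∀ (m : ℕ) (G : SimpleGraph (Fin m)),
    (∃ n : ℕ, ∃ H ∈ C n, IsShallowMinor d G H) → G.edgeSet.ncard ≤ a * m

/-- A class of graphs is nowhere dense if for every `d` some graph is not a `d`-shallow minor
of any member of the class. -/
def NowhereDense (C : GraphClass) : Prop :=
  ∀ d : ℕ, ∃ (m : ℕ) (G : SimpleGraph (Fin m)), ¬ ∃ n : ℕ, ∃ H ∈ C n, IsShallowMinor d G H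

/-- The closed neighborhood of `v` in `G`. -/
def closedNbr {V : Type*} (G : SimpleGraph V) (v : V) : Set V :=
  insert v (G.neighborSet v)

/-- The sum of the labels over the closed neighborhood of `v`. -/
noncomputable def closedNbrSum {V : Type*} [Fintype V] (G : SimpleGraph V)
    (f : V → ℕ) (v : V) : ℕ :=
  ∑ x : V, if x ∈ closedNbr G v then f x else 0

/-- A labeling is distinguishing if adjacent vertices with different closed neighborhoods
receive different label sums over their closed neighborhoods. -/
def Distinguishing {V : Type*} [Fintype V] (G : SimpleGraph V) (f : V → ℕ) : Prop :=
  ∀ u v : V, G.Adj u v → closedNbr G u ≠ closedNbr G v →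
    closedNbrSum G f u ≠ closedNbrSum G f v

/-- The adjacent closed vertex-distinguishing number of `G`. -/
noncomputable def disNumber {V : Type*} [Fintype V] (G : SimpleGraph V) : ℕ :=
  sInf {L | 1 ≤ L ∧ ∃ f : V → ℕ, (∀ v, 1 ≤ f v ∧ f v ≤ L) ∧ Distinguishing G f}

/-- A proper coloring in which any two color classes together induce a forest. -/
def IsAcyclicColoring {V : Type*} (G : SimpleGraph V) {m : ℕ} (c : V → Fin m) : Prop :=
  (∀ u v : V, G.Adj u v → c u ≠ c v) ∧
  ∀ i j : Fin m, (G.induce {v | c v = i ∨ c v = j}).IsAcyclic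

/-- The acyclic chromatic number of `G`. -/
noncomputable def chiAcyc {V : Type*} (G : SimpleGraph V) : ℕ :=
  sInf {m | ∃ c : V → Fin m, IsAcyclicColoring G c}

/-- The edge arboricity of `G`: the least number of (not necessarily induced) forests
covering all edges of `G`. -/
noncomputable def arboricity {V : Type*} (G : SimpleGraph V) : ℕ :=
  sInf {N | ∃ F : Fin N → SimpleGraph V,
    (∀ i, F i ≤ G ∧ (F i).IsAcyclic) ∧
    ∀ e ∈ G.edgeSet, ∃ i, e ∈ (F i).edgeSet}

/-- `G` admits a tree decomposition of width at most `t`. -/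
def HasTreewidthAtMost {V : Type*} (G : SimpleGraph V) (t : ℕ) : Prop :=
  ∃ (ι : Type) (T : SimpleGraph ι) (B : ι → Finset V),
    T.IsTree ∧
    (∀ e ∈ G.edgeSet, ∃ i, ∀ x ∈ e, x ∈ B i) ∧
    (∀ v : V, (T.induce {i | v ∈ B i}).Connected) ∧
    (∀ i, (B i).card ≤ t + 1)

/-- The tree-width of `G`. -/
noncomputable def treewidth {V : Type*} (G : SimpleGraph V) : ℕ :=
  sInf {t | HasTreewidthAtMost G t}

/-- `G` has tree-depth at most `d`: there is a "forest order" on the vertices (the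
ancestor order of a rooted spanning forest) in which ancestor sets are chains of at most
`d` vertices and endpoints of edges of `G` are comparable.  Equivalently, every connected
component of `G` is a subgraph of the transitive closure of a rooted tree of depth `d`. -/
def HasTreedepthAtMost {V : Type*} (G : SimpleGraph V) (d : ℕ) : Prop :=
  ∃ le : V → V → Prop, IsPartialOrder V le ∧
    (∀ v : V, IsChain le {u | le u v}) ∧
    (∀ u v : V, G.Adj u v → le u v ∨ le v u) ∧
    (∀ v : V, {u | le u v}.ncard ≤ d)

/-- The tree-depth of `G`. -/
noncomputable def treedepth {V : Type*} (G : SimpleGraph V) : ℕ :=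
  sInf {d | HasTreedepthAtMost G d}

/-- `G` is a minor of `H`, witnessed by disjoint connected branch sets. -/
def IsMinorOf {V W : Type*} (G : SimpleGraph V) (H : SimpleGraph W) : Prop :=
  ∃ B : V → Set W,
    Pairwise (Disjoint on B) ∧
    (∀ v, (B v).Nonempty) ∧
    (∀ v, (H.induce (B v)).Connected) ∧
    (∀ u v, G.Adj u v → ∃ x ∈ B u, ∃ y ∈ B v, H.Adj x y)

/-- A class of graphs closed under taking minors. -/
def MinorClosed (C : GraphClass) : Prop :=
  ∀ (m n : ℕ) (G : SimpleGraph (Fin m)) (H : SimpleGraph (Fin n)),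
    H ∈ C n → IsMinorOf G H → G ∈ C m

/-- Planarity, via Wagner's characterization: no `K₅` and no `K₃,₃` minor. -/
def IsPlanar {V : Type*} (G : SimpleGraph V) : Prop :=
  ¬ IsMinorOf (SimpleGraph.completeGraph (Fin 5)) G ∧
  ¬ IsMinorOf (completeBipartiteGraph (Fin 3) (Fin 3)) G

/-- The graph obtained from the complete bipartite graph `K_{n,n}` by subdividing every edge
once: the original vertices are the summands `Fin n ⊕ Fin n`, and the subdivision vertex of
the edge between left vertex `i` and right vertex `j` is the pair `(i, j)`. -/
def subdividedKnn (n : ℕ) : SimpleGraph ((Fin n ⊕ Fin n) ⊕ Fin n × Fin n) :=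
  SimpleGraph.fromRel (fun a b =>
    match a, b with
    | Sum.inl (Sum.inl i), Sum.inr p => p.1 = i
    | Sum.inl (Sum.inr j), Sum.inr p => p.2 = j
    | _, _ => False)

/-- The class consisting of the graphs `G_n` (`n ≥ 1`), where `G_n` is obtained from
`K_{n,n}` by subdividing every edge once. -/
def subKnnClass : GraphClass :=
  fun m => {G | ∃ n : ℕ, 1 ≤ n ∧ Nonempty (G ≃g subdividedKnn n)}

lemma forestEdges_eq_image {V : Type*} (G : SimpleGraph V) (S : Set V) :
    forestEdges G S = Sym2.map Subtype.val '' (G.induce S).edgeSet := by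
  ext e
  constructor
  · induction e with
    | _ x y =>
      rintro ⟨h, hS⟩
      refine ⟨s(⟨x, hS x (by simp)⟩, ⟨y, hS y (by simp)⟩), ?_, by simp⟩
      simpa using h
  · rintro ⟨e, he, rfl⟩
    induction e with
    | _ x y =>
      refine ⟨by simpa using he, ?_⟩
      intro z hz
      simp only [Sym2.map_mk, Sym2.mem_iff] at hz
      rcases hz with rfl | rfl
      · exact x.2
      · exact y.2

lemma ncard_forestEdges {V : Type*} (G : SimpleGraph V) (S : Set V) :
    (forestEdges G S).ncard = (G.induce S).edgeSet.ncard := by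
  rw [forestEdges_eq_image]
  exact Set.ncard_image_of_injective _ (Sym2.map.injective Subtype.val_injective)

lemma forest_bound {V : Type*} [Finite V] [Nonempty V] (G : SimpleGraph V) (h : G.IsAcyclic) :
    G.edgeSet.ncard + 1 ≤ Nat.card V := by
  obtain ⟨T, hT⟩ := SimpleGraph.connected_top (V := V) |>.exists_isTree_le_of_le_of_isAcyclic
    (le_top : G ≤ ⊤) h
  have hle : G ≤ T := by tauto
  have hTT : T.IsTree := by tauto
  have := (SimpleGraph.isTree_iff_connected_and_card.1 hTT).2
  rw [← this, Nat.card_coe_set_eq]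
  have := Set.ncard_le_ncard (SimpleGraph.edgeSet_mono hle) (Set.toFinite _)
  omega

lemma compEdgeCount_le {W : Type*} [Finite W] (H : SimpleGraph W) (v : W) :
    compEdgeCount H v ≤ H.edgeSet.ncard :=
  Set.ncard_le_ncard (fun _ h => h.1) (Set.toFinite _)

lemma compEdgeCount_connected {W : Type*} (H : SimpleGraph W) (hH : H.Connected) (v : W) :
    compEdgeCount H v = H.edgeSet.ncard := by
  unfold compEdgeCount
  congr 1
  ext e
  simp only [Set.mem_ofPred_eq, and_iff_left_iff_imp]
  intro _ x _
  exact hH.preconnected v x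

lemma compEdgeCount_iso {V W : Type*} {G : SimpleGraph V} {H : SimpleGraph W} (φ : G ≃g H)
    (v : V) : compEdgeCount G v = compEdgeCount H (φ v) := by
  unfold compEdgeCount
  rw [← Set.ncard_image_of_injective _ (Sym2.map.injective φ.injective)]
  congr 1
  ext e
  constructor
  · rintro ⟨e, ⟨he, hr⟩, rfl⟩
    induction e with
    | _ x y =>
      refine ⟨φ.map_adj_iff.2 he, ?_⟩
      intro z hz
      simp only [Sym2.map_mk, Sym2.mem_iff] at hz
      rcases hz with rfl | rfl
      · exact SimpleGraph.Iso.reachable_iff.2 (hr x (by simp))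
      · exact SimpleGraph.Iso.reachable_iff.2 (hr y (by simp))
  · induction e with
    | _ x y =>
      obtain ⟨x, rfl⟩ := φ.surjective x
      obtain ⟨y, rfl⟩ := φ.surjective y
      rintro ⟨he, hr⟩
      refine ⟨s(x, y), ⟨φ.map_adj_iff.1 he, ?_⟩, by simp⟩
      intro z hz
      simp only [Sym2.mem_iff] at hz
      rcases hz with rfl | rfl
      · exact SimpleGraph.Iso.reachable_iff.1 (hr (φ z) (by simp))
      · exact SimpleGraph.Iso.reachable_iff.1 (hr (φ z) (by simp))

/-- Induced subgraphs on preimages are isomorphic. -/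
def induceIsoPre {V W : Type*} {G : SimpleGraph V} {H : SimpleGraph W} (φ : G ≃g H)
    (S : Set W) : G.induce (φ ⁻¹' S) ≃g H.induce S where
  toFun x := ⟨φ x.1, x.2⟩
  invFun y := ⟨φ.symm y.1, by simp⟩
  left_inv x := by simp
  right_inv y := by simp
  map_rel_iff' := φ.map_adj_iff

lemma IsStrongForest.pre {V W : Type*} {G : SimpleGraph V} {H : SimpleGraph W} (φ : G ≃g H)
    {k : ℕ} {S : Set W} (h : IsStrongForest H k S) : IsStrongForest G k (φ ⁻¹' S) := by
  refine ⟨(induceIsoPre φ S).isAcyclic_iff.2 h.1, fun v => ?_⟩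
  rw [compEdgeCount_iso (induceIsoPre φ S)]
  exact h.2 _

section knn
variable {n : ℕ}

/-- left vertex -/
abbrev lv (i : Fin n) : (Fin n ⊕ Fin n) ⊕ Fin n × Fin n := Sum.inl (Sum.inl i)
/-- right vertex -/
abbrev rv (i : Fin n) : (Fin n ⊕ Fin n) ⊕ Fin n × Fin n := Sum.inl (Sum.inr i)
/-- subdivision vertex -/
abbrev pv (p : Fin n × Fin n) : (Fin n ⊕ Fin n) ⊕ Fin n × Fin n := Sum.inr p

lemma adj_lp (i : Fin n) (p : Fin n × Fin n) : (subdividedKnn n).Adj (lv i) (pv p) ↔ p.1 = i := by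
  simp [subdividedKnn, lv, pv]
lemma adj_rp (i : Fin n) (p : Fin n × Fin n) : (subdividedKnn n).Adj (rv i) (pv p) ↔ p.2 = i := by
  simp [subdividedKnn, rv, pv]

lemma adj_cases {x y} (h : (subdividedKnn n).Adj x y) :
    (∃ p, s(x, y) = s(lv p.1, pv p)) ∨ (∃ p, s(x, y) = s(rv p.2, pv p)) := by
  rcases x with (i | i) | p <;> rcases y with (j | j) | q <;>
    simp [subdividedKnn] at h
  · left; exact ⟨q, by simp [lv, pv, h]⟩
  · right; exact ⟨q, by simp [rv, pv, h]⟩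
  · left; exact ⟨p, by simp [lv, pv, h]⟩
  · right; exact ⟨p, by simp [rv, pv, h]⟩

lemma forestEdges_knn (S : Set ((Fin n ⊕ Fin n) ⊕ Fin n × Fin n)) :
    forestEdges (subdividedKnn n) S =
      (fun p : Fin n × Fin n => s(lv p.1, pv p)) '' {p | lv p.1 ∈ S ∧ pv p ∈ S} ∪
      (fun p : Fin n × Fin n => s(rv p.2, pv p)) '' {p | rv p.2 ∈ S ∧ pv p ∈ S} := by
  ext e
  constructor
  · induction e with
    | _ x y =>
      rintro ⟨h, hS⟩
      rcases adj_cases h with ⟨p, hp⟩ | ⟨p, hp⟩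
      · rw [hp] at hS ⊢
        left
        exact ⟨p, ⟨hS _ (by simp), hS _ (by simp)⟩, rfl⟩
      · rw [hp] at hS ⊢
        right
        exact ⟨p, ⟨hS _ (by simp), hS _ (by simp)⟩, rfl⟩
  · rintro (⟨p, ⟨h1, h2⟩, rfl⟩ | ⟨p, ⟨h1, h2⟩, rfl⟩)
    · refine ⟨(adj_lp _ _).2 rfl, fun x hx => ?_⟩
      rcases Sym2.mem_iff.1 hx with rfl | rfl <;> assumption
    · refine ⟨(adj_rp _ _).2 rfl, fun x hx => ?_⟩
      rcases Sym2.mem_iff.1 hx with rfl | rfl <;> assumption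

lemma ncard_forestEdges_knn (S : Set ((Fin n ⊕ Fin n) ⊕ Fin n × Fin n)) :
    (forestEdges (subdividedKnn n) S).ncard =
      {p : Fin n × Fin n | lv p.1 ∈ S ∧ pv p ∈ S}.ncard +
      {p : Fin n × Fin n | rv p.2 ∈ S ∧ pv p ∈ S}.ncard := by
  rw [forestEdges_knn, Set.ncard_union_eq _ (Set.toFinite _) (Set.toFinite _),
    Set.ncard_image_of_injective, Set.ncard_image_of_injective]
  · intro p q h
    simp [rv, pv] at h
    exact h.2
  · intro p q h
    simp [lv, pv] at h
    exact h.2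
  · rw [Set.disjoint_left]
    rintro _ ⟨p, _, rfl⟩ ⟨q, _, h⟩
    simp [lv, rv, pv] at h

lemma ncard_knn (S : Set ((Fin n ⊕ Fin n) ⊕ Fin n × Fin n)) :
    S.ncard = {i : Fin n | lv i ∈ S}.ncard + {i : Fin n | rv i ∈ S}.ncard +
      {p : Fin n × Fin n | pv p ∈ S}.ncard := by
  have : S = (lv '' {i : Fin n | lv i ∈ S} ∪ rv '' {i : Fin n | rv i ∈ S}) ∪
      pv '' {p : Fin n × Fin n | pv p ∈ S} := by
    ext x
    rcases x with (i | i) | p <;> simp [lv, rv, pv]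
  conv_lhs => rw [this]
  rw [Set.ncard_union_eq _ (Set.toFinite _) (Set.toFinite _),
    Set.ncard_union_eq _ (Set.toFinite _) (Set.toFinite _),
    Set.ncard_image_of_injective, Set.ncard_image_of_injective, Set.ncard_image_of_injective]
  · intro p q h; simpa [pv] using h
  · intro p q h; simpa [rv] using h
  · intro p q h; simpa [lv] using h
  · rw [Set.disjoint_left]
    rintro _ ⟨p, _, rfl⟩ ⟨q, _, h⟩
    simp [lv, rv] at h
  · rw [Set.disjoint_left]
    rintro _ (⟨p, _, rfl⟩ | ⟨p, _, rfl⟩) ⟨q, _, h⟩ <;>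
    simp [lv, rv, pv] at h

/-- The basic tree. -/
def treeSet (j : Fin n) : Set ((Fin n ⊕ Fin n) ⊕ Fin n × Fin n) := {x | ∀ i, x = rv i → i = j}

lemma treeSet_connected (j : Fin n) :
    ((subdividedKnn n).induce (treeSet j)).Connected := by
  have hL (i : Fin n) : lv i ∈ treeSet j := by simp [treeSet, lv, rv]
  have hP (p : Fin n × Fin n) : pv p ∈ treeSet j := by simp [treeSet, pv, rv]
  have hR : rv j ∈ treeSet j := by simp [treeSet, rv]
  have h1 (p : Fin n × Fin n) :
      ((subdividedKnn n).induce (treeSet j)).Reachable ⟨lv p.1, hL _⟩ ⟨pv p, hP p⟩ :=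
    SimpleGraph.Adj.reachable ((adj_lp p.1 p).2 rfl)
  have h2 (i : Fin n) :
      ((subdividedKnn n).induce (treeSet j)).Reachable ⟨rv j, hR⟩ ⟨pv (i, j), hP _⟩ :=
    SimpleGraph.Adj.reachable ((adj_rp j (i, j)).2 rfl)
  have h3 (i : Fin n) :
      ((subdividedKnn n).induce (treeSet j)).Reachable ⟨rv j, hR⟩ ⟨lv i, hL _⟩ :=
    (h2 i).trans (h1 (i, j)).symm
  rw [SimpleGraph.connected_iff_exists_forall_reachable]
  refine ⟨⟨rv j, hR⟩, ?_⟩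
  rintro ⟨(i | i) | p, hx⟩
  · exact h3 i
  · obtain rfl : i = j := hx i rfl
    exact SimpleGraph.Reachable.refl _
  · exact (h3 p.1).trans (h1 p)

lemma treeSet_edges (j : Fin n) :
    ((subdividedKnn n).induce (treeSet j)).edgeSet.ncard = n * n + n := by
  rw [← ncard_forestEdges, ncard_forestEdges_knn]
  congr 1
  · have : {p : Fin n × Fin n | lv p.1 ∈ treeSet j ∧ pv p ∈ treeSet j} = Set.univ := by
      ext p; simp [treeSet, lv, rv, pv]
    rw [this, Set.ncard_univ]; simp
  · have : {p : Fin n × Fin n | rv p.2 ∈ treeSet j ∧ pv p ∈ treeSet j} =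
        (fun i => (i, j)) '' Set.univ := by
      ext ⟨a, b⟩; simp [treeSet, rv, pv]; exact eq_comm
    rw [this, Set.ncard_image_of_injective, Set.ncard_univ]
    · simp
    · intro a b h; simpa using h

lemma treeSet_card (j : Fin n) : (treeSet j).ncard = n * n + n + 1 := by
  rw [ncard_knn]
  have h1 : {i : Fin n | lv i ∈ treeSet j} = Set.univ := by ext; simp [treeSet, lv, rv]
  have h2 : {i : Fin n | rv i ∈ treeSet j} = {j} := by ext; simp [treeSet, rv]
  have h3 : {p : Fin n × Fin n | pv p ∈ treeSet j} = Set.univ := by ext; simp [treeSet, pv, rv]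
  rw [h1, h2, h3]
  simp [Set.ncard_univ]
  ring

lemma treeSet_strong (j : Fin n) {k : ℕ} (hk : k ≤ n * n + n) :
    IsStrongForest (subdividedKnn n) k (treeSet j) := by
  have hc := treeSet_connected j
  refine ⟨(SimpleGraph.isTree_iff_connected_and_card.2 ⟨hc, ?_⟩).isAcyclic, fun v => ?_⟩
  · rw [Nat.card_coe_set_eq, Nat.card_coe_set_eq, treeSet_edges, treeSet_card]
  · rw [compEdgeCount_connected _ hc, treeSet_edges]; exact hk

/-- The automorphism exchanging the two sides. -/
def swapIso (n : ℕ) : subdividedKnn n ≃g subdividedKnn n where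
  toEquiv := Equiv.sumCongr (Equiv.sumComm _ _) (Equiv.prodComm _ _)
  map_rel_iff' := by
    rintro ((i | i) | p) ((j | j) | q) <;> simp [subdividedKnn]

lemma arith (n a b : ℕ) (ha : 1 ≤ a) (hb : 1 ≤ b) (ha' : a ≤ n) (hb' : b ≤ n) :
    n * a + n * b + 2 * (a + b) ≤ n * n + n + 2 * (a * b) + 2 := by
  obtain ⟨u, rfl⟩ := Nat.exists_eq_add_of_le ha
  obtain ⟨v, rfl⟩ := Nat.exists_eq_add_of_le hb
  obtain ⟨w, rfl⟩ := Nat.exists_eq_add_of_le ha'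
  by_cases h : 2 * (1 + u) ≥ (1 + u + w) + 2
  · obtain ⟨z, hz⟩ := Nat.exists_eq_add_of_le h
    obtain rfl : u = w + 1 + z := by omega
    nlinarith [Nat.zero_le (v * z)]
  · obtain ⟨t, ht⟩ := Nat.exists_eq_add_of_le hb'
    have : u ≤ w := by omega
    rcases Nat.eq_zero_or_pos (u + w) with h0 | h0
    · obtain rfl : u = 0 := by omega
      obtain rfl : w = 0 := by omega
      obtain rfl : v = 0 := by omega
      simp
    · obtain ⟨s, rfl⟩ := Nat.exists_eq_add_of_le this
      obtain rfl : v = u + u + s - t := by omega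
      have : t ≤ u + u + s := by omega
      zify [this] at *
      nlinarith

lemma forest_knn_bound (S : Set ((Fin n ⊕ Fin n) ⊕ Fin n × Fin n))
    (hS : ((subdividedKnn n).induce S).IsAcyclic) :
    ((subdividedKnn n).induce S).edgeSet.ncard ≤ n * n + n := by
  rw [← ncard_forestEdges, ncard_forestEdges_knn]
  set A : Set (Fin n) := {i | lv i ∈ S} with hA
  set B : Set (Fin n) := {i | rv i ∈ S} with hB
  set Q : Set (Fin n × Fin n) := {p | lv p.1 ∈ S ∧ rv p.2 ∈ S ∧ pv p ∈ S} with hQ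
  have e1 : {p : Fin n × Fin n | lv p.1 ∈ S ∧ pv p ∈ S}.ncard ≤ (A ×ˢ Bᶜ).ncard + Q.ncard := by
    refine le_trans (Set.ncard_le_ncard ?_ (Set.toFinite _)) (Set.ncard_union_le _ _)
    rintro p ⟨h1, h2⟩
    by_cases h : rv p.2 ∈ S
    · right; exact ⟨h1, h, h2⟩
    · left; exact ⟨h1, h⟩
  have e2 : {p : Fin n × Fin n | rv p.2 ∈ S ∧ pv p ∈ S}.ncard ≤ (Aᶜ ×ˢ B).ncard + Q.ncard := by
    refine le_trans (Set.ncard_le_ncard ?_ (Set.toFinite _)) (Set.ncard_union_le _ _)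
    rintro p ⟨h1, h2⟩
    by_cases h : lv p.1 ∈ S
    · right; exact ⟨h, h1, h2⟩
    · left; exact ⟨h, h1⟩
  have hAc := Set.ncard_add_ncard_compl A
  have hBc := Set.ncard_add_ncard_compl B
  simp only [Nat.card_eq_fintype_card, Fintype.card_fin] at hAc hBc
  rw [Set.ncard_prod] at e1 e2
  have hQ1 : Q.ncard ≤ A.ncard * B.ncard := by
    rw [← Set.ncard_prod]
    exact Set.ncard_le_ncard (fun p hp => ⟨hp.1, hp.2.1⟩) (Set.toFinite _)
  by_cases h0 : A.ncard = 0 ∨ B.ncard = 0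
  · have : Q.ncard = 0 := by
      have : A.ncard * B.ncard = 0 := by simpa using h0
      omega
    have hA' : A.ncard ≤ n := by omega
    have hB' : B.ncard ≤ n := by omega
    have hA2 : Aᶜ.ncard ≤ n := by omega
    have hB2 : Bᶜ.ncard ≤ n := by omega
    have m1 := Nat.mul_le_mul hA' hB2
    have m2 := Nat.mul_le_mul hA2 hB'
    rcases h0 with h0 | h0
    · have : A.ncard * Bᶜ.ncard = 0 := by rw [h0, zero_mul]
      omega
    · have : Aᶜ.ncard * B.ncard = 0 := by rw [h0, mul_zero]
      omega
  push Not at h0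
  -- the reduced forest
  set S' : Set ((Fin n ⊕ Fin n) ⊕ Fin n × Fin n) := {x | x ∈ S ∧ ∀ p, x = pv p → p ∈ Q} with hS'
  have hsub : S' ⊆ S := fun x hx => hx.1
  have hac : ((subdividedKnn n).induce S').IsAcyclic :=
    hS.embedding (SimpleGraph.induceHomOfLE (subdividedKnn n) hsub)
  have hne : Nonempty S' := by
    obtain ⟨i, hi⟩ := Set.nonempty_of_ncard_ne_zero h0.1
    exact ⟨⟨lv i, hi, by simp [lv, pv]⟩⟩
  have hb := forest_bound _ hac
  rw [← ncard_forestEdges, ncard_forestEdges_knn, Nat.card_coe_set_eq, ncard_knn] at hb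
  have h1 : {i : Fin n | lv i ∈ S'} = A := by ext; simp [hS', hA, lv, pv]
  have h2 : {i : Fin n | rv i ∈ S'} = B := by ext; simp [hS', hB, rv, pv]
  have hpS (p : Fin n × Fin n) : pv p ∈ S' ↔ p ∈ Q := by
    constructor
    · rintro ⟨_, h⟩; exact h p rfl
    · intro h
      refine ⟨h.2.2, fun q hq => ?_⟩
      obtain rfl : p = q := Sum.inr_injective hq
      exact h
  have hlS (i : Fin n) : lv i ∈ S' ↔ lv i ∈ S := Set.ext_iff.1 h1 i
  have hrS (i : Fin n) : rv i ∈ S' ↔ rv i ∈ S := Set.ext_iff.1 h2 i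
  have h3 : {p : Fin n × Fin n | pv p ∈ S'} = Q := Set.ext hpS
  have h4 : {p : Fin n × Fin n | lv p.1 ∈ S' ∧ pv p ∈ S'} = Q := by
    ext p
    exact ⟨fun h => (hpS p).1 h.2, fun h => ⟨(hlS _).2 h.1, (hpS p).2 h⟩⟩
  have h5 : {p : Fin n × Fin n | rv p.2 ∈ S' ∧ pv p ∈ S'} = Q := by
    ext p
    exact ⟨fun h => (hpS p).1 h.2, fun h => ⟨(hrS _).2 h.2.1, (hpS p).2 h⟩⟩
  rw [h1, h2, h3, h4, h5] at hb
  have ha := arith n A.ncard B.ncard (by omega) (by omega) (by omega) (by omega)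
  have e3 : A.ncard * Bᶜ.ncard + A.ncard * B.ncard = n * A.ncard := by
    rw [← mul_add, add_comm Bᶜ.ncard, hBc, mul_comm]
  have e4 : Aᶜ.ncard * B.ncard + A.ncard * B.ncard = n * B.ncard := by
    rw [← add_mul, add_comm Aᶜ.ncard, hAc]
  omega

end knn

lemma fStrong_le_two {V : Type*} (G : SimpleGraph V) {n : ℕ} (hn : 1 ≤ n)
    (φ : G ≃g subdividedKnn n) (k : ℕ) : fStrong G k ≤ 2 := by
  by_cases hk : k ≤ n * n + n
  · let j : Fin n := ⟨0, hn⟩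
    refine Nat.sInf_le ⟨![φ ⁻¹' (treeSet j), φ ⁻¹' (swapIso n ⁻¹' (treeSet j))], ?_, ?_⟩
    · intro i
      fin_cases i
      · exact (treeSet_strong j hk).pre φ
      · exact ((treeSet_strong j hk).pre (swapIso n)).pre φ
    · rintro e ⟨S, -, he⟩
      have he := he.1
      induction e with
      | _ x y =>
        have h1 : s(φ x, φ y) ∈ (subdividedKnn n).edgeSet := φ.map_adj_iff.2 he
        rcases adj_cases h1 with ⟨p, hp⟩ | ⟨p, hp⟩
        · refine ⟨0, he, ?_⟩
          have key : ∀ z ∈ s(φ x, φ y), z ∈ treeSet j := by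
            rw [hp]
            intro z hz
            rcases Sym2.mem_iff.1 hz with rfl | rfl <;> simp [treeSet, lv, rv, pv]
          intro z hz
          apply key
          rcases Sym2.mem_iff.1 hz with rfl | rfl <;> simp
        · refine ⟨1, he, ?_⟩
          have key : ∀ z ∈ s(φ x, φ y), z ∈ swapIso n ⁻¹' treeSet j := by
            rw [hp]
            intro z hz
            rcases Sym2.mem_iff.1 hz with rfl | rfl <;> simp [treeSet, swapIso, rv, pv]
          intro z hz
          apply key
          rcases Sym2.mem_iff.1 hz with rfl | rfl <;> simp
  · refine le_trans (Nat.sInf_le (m := 0) ⟨Fin.elim0, fun i => i.elim0, ?_⟩) (by norm_num)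
    rintro e ⟨S, hS, he⟩
    exfalso
    have hS' := hS.pre φ.symm
    induction e with
    | _ x y =>
      have hx : x ∈ S := he.2 x (by simp)
      have h1 := hS'.2 ⟨φ x, by simpa using hx⟩
      have h2 := forest_knn_bound _ hS'.1
      have h3 := compEdgeCount_le ((subdividedKnn n).induce (φ.symm ⁻¹' S))
        ⟨φ x, by simpa using hx⟩
      omega

lemma shallow_knn {m : ℕ} (G : SimpleGraph (Fin m)) {W : Type*} (H : SimpleGraph W)
    (φ : H ≃g subdividedKnn (m + 1)) : IsShallowMinor 2 G H := by
  let C : Fin m → Set ((Fin (m+1) ⊕ Fin (m+1)) ⊕ Fin (m+1) × Fin (m+1)) := fun v =>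
    {x | x = lv v.castSucc ∨ x = rv v.castSucc ∨ ∃ j, x = pv (v.castSucc, j)}
  refine ⟨fun v => φ ⁻¹' C v, ?_, ?_, ?_⟩
  · intro u v huv
    refine Disjoint.preimage _ ?_
    rw [Set.disjoint_left]
    rintro x (rfl | rfl | ⟨j, rfl⟩) h <;> simp [C, lv, rv, pv] at h <;> exact huv h
  · intro v
    have hl : lv v.castSucc ∈ C v := by simp [C]
    have hr : rv v.castSucc ∈ C v := by simp [C]
    have hp (j) : pv (v.castSucc, j) ∈ C v := by simp [C]
    let ψ := induceIsoPre φ (C v)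
    have fin : ∀ y : C v, ∃ w : ((subdividedKnn (m+1)).induce (C v)).Walk ⟨_, hl⟩ y,
        w.length ≤ 2 := by
      have a1 (j) : ((subdividedKnn (m+1)).induce (C v)).Adj ⟨_, hl⟩ ⟨_, hp j⟩ := by
        exact (adj_lp v.castSucc (v.castSucc, j)).2 rfl
      have a2 : ((subdividedKnn (m+1)).induce (C v)).Adj ⟨_, hp v.castSucc⟩ ⟨_, hr⟩ := by
        exact ((adj_rp v.castSucc (v.castSucc, v.castSucc)).2 rfl).symm
      rintro ⟨y, hy⟩
      have hy' := hy
      rcases hy' with rfl | rfl | ⟨j, rfl⟩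
      · exact ⟨.nil, by simp⟩
      · exact ⟨.cons (a1 _) (.cons a2 .nil), by simp⟩
      · exact ⟨.cons (a1 _) .nil, by simp⟩
    refine ⟨ψ.symm ⟨_, hl⟩, fun y => ?_⟩
    obtain ⟨w, hw⟩ := fin (ψ y)
    let w' := (w.map ψ.symm.toHom).copy rfl (ψ.symm_apply_apply y)
    have hw' : w'.length ≤ 2 := by simpa [w'] using hw
    exact ⟨w'.reachable, (SimpleGraph.dist_le w').trans hw'⟩
  · intro u v _
    refine ⟨φ.symm (pv (u.castSucc, v.castSucc)), by simp [C], φ.symm (rv v.castSucc),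
      by simp [C], ?_⟩
    rw [SimpleGraph.Iso.map_adj_iff]
    exact ((adj_rp _ _).2 rfl).symm

/-- The class `C = {G_n : n ≥ 1}`, where `G_n` is obtained from `K_{n,n}`
by subdividing every edge once, satisfies `f_k(G) ≤ 2` for every `G ∈ C` and every `k ≥ 1`
(so it is `f_k`-bounded for every `k`), but it is not nowhere dense. -/
theorem subKnnClass_fStrong_bounded_not_nowhereDense :
    (∀ k : ℕ, 1 ≤ k → ∀ (m : ℕ), ∀ G ∈ subKnnClass m, fStrong G k ≤ 2) ∧
    ¬ NowhereDense subKnnClass := by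
  refine ⟨?_, ?_⟩
  · rintro k _ m G ⟨n, hn, ⟨φ⟩⟩
    exact fStrong_le_two G hn φ k
  · intro h
    obtain ⟨m, G, hG⟩ := h 2
    apply hG
    let ψ := (subdividedKnn (m + 1)).overFinIso rfl
    exact ⟨_, _, ⟨m + 1, by omega, ⟨ψ.symm⟩⟩, shallow_knn G _ ψ.symm⟩
end InducedArboricity
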